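/- arXiv:1901.06814 — 4 statements merged into one kernel-verified Lean document; each statement's English description precedes it below -/
import Mathlib

section
/- There exists a constant C > 0 such that for every integer k ≥ 1, |b_{k−1} − k^{−β}/Γ(1−β)| ≤ C·k^{−1−β}, where b_{k−1} = ∑_{j=0}^{k−1} ϖ_j; that is, b_{k−1} = k^{−β}/Γ(1−β) + O(k^{−1−β}). -/
open Finset

/-- Generalized binomial coefficient `C(α, j) = α(α−1)⋯(α−j+1)/j!`. -/
noncomputable def genBinom (α : ℝ) (j : ℕ) : ℝ :=
  (∏ i ∈ Finset.range j, (α - i)) / (Nat.factorial j)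

/-- The coefficients `ϖ_j = (−1)^j C(β, j)` of `(1−z)^β`. -/
noncomputable def varpi (β : ℝ) (j : ℕ) : ℝ := (-1 : ℝ) ^ j * genBinom β j

lemma varpi_succ (β : ℝ) (n : ℕ) : varpi β (n+1) * (n+1) = varpi β n * (n - β) := by
  unfold varpi genBinom
  rw [Finset.prod_range_succ, Nat.factorial_succ, pow_succ]
  have h1 : (Nat.factorial n : ℝ) ≠ 0 := by positivity
  have h2 : (n : ℝ) + 1 ≠ 0 := by positivity
  push_cast
  field_simp
  ring

lemma varpi_sum (β : ℝ) (n : ℕ) :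
    varpi β (n+1) * (n+1) = -β * ∑ j ∈ Finset.range (n+1), varpi β j := by
  induction n with
  | zero => simp [varpi, genBinom]
  | succ n ih =>
    rw [Finset.sum_range_succ, varpi_succ]
    push_cast
    linear_combination ih

lemma sum_eq_Gamma (β : ℝ) (hβ1 : β < 1) (n : ℕ) :
    (∑ j ∈ Finset.range (n+1), varpi β j) * (Real.Gamma (1 - β) * Real.Gamma (n+1)) =
      Real.Gamma (n + 1 - β) := by
  induction n with
  | zero => simp [varpi, genBinom]
  | succ n ih =>
    have h2 : (n : ℝ) + 1 ≠ 0 := by positivity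
    have h3 : (n : ℝ) + 1 - β ≠ 0 := by
      have : (0:ℝ) ≤ n := by positivity
      linarith
    have hv := varpi_sum β n
    rw [Finset.sum_range_succ]
    push_cast
    rw [Real.Gamma_add_one h2, show (n : ℝ) + 1 + 1 - β = (n + 1 - β) + 1 by ring,
      Real.Gamma_add_one h3, ← ih]
    linear_combination (Real.Gamma (1 - β) * Real.Gamma (n+1)) * hv

lemma Gamma_lower (β : ℝ) (hβ0 : 0 < β) (hβ1 : β < 1) (x : ℝ) (hx : 1 ≤ x) :
    x ^ (-β) * Real.Gamma x ≤ Real.Gamma (x - β) := by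
  have hy : 0 < x - β := by linarith
  have hG := Real.Gamma_pos_of_pos hy
  have h := Real.Gamma_mul_add_mul_le_rpow_Gamma_mul_rpow_Gamma hy
    (show 0 < x - β + 1 by linarith) (show 0 < 1 - β by linarith) hβ0 (by ring)
  rw [show (1 - β) * (x - β) + β * (x - β + 1) = x by ring, Real.Gamma_add_one hy.ne',
    Real.mul_rpow hy.le hG.le, mul_left_comm, ← Real.rpow_add hG, sub_add_cancel,
    Real.rpow_one] at h
  have h1 : (x - β) ^ β ≤ x ^ β := Real.rpow_le_rpow hy.le (by linarith) hβ0.le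
  have hxp : 0 < x ^ β := Real.rpow_pos_of_pos (by linarith) _
  rw [Real.rpow_neg (by linarith), inv_mul_le_iff₀ hxp]
  exact h.trans (mul_le_mul_of_nonneg_right h1 hG.le)

lemma Gamma_upper (β : ℝ) (hβ0 : 0 < β) (hβ1 : β < 1) (x : ℝ) (hx : 1 ≤ x) :
    Real.Gamma (x + 1 - β) ≤ x ^ (-β) * Real.Gamma (x + 1) := by
  have hx0 : 0 < x := by linarith
  have hG := Real.Gamma_pos_of_pos hx0
  have h := Real.Gamma_mul_add_mul_le_rpow_Gamma_mul_rpow_Gamma hx0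
    (show 0 < x + 1 by linarith) hβ0 (show 0 < 1 - β by linarith) (by ring)
  rw [show β * x + (1 - β) * (x + 1) = x + 1 - β by ring, Real.Gamma_add_one hx0.ne',
    Real.mul_rpow hx0.le hG.le, mul_left_comm, ← Real.rpow_add hG, add_sub_cancel,
    Real.rpow_one, show 1 - β = -β + 1 by ring, Real.rpow_add hx0, Real.rpow_one] at h
  rw [Real.Gamma_add_one hx0.ne', ← mul_assoc]
  exact h

lemma rpow_diff (β : ℝ) (hβ0 : 0 < β) (hβ1 : β < 1) (x : ℝ) (hx : 1 ≤ x) :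
    x ^ (-β) ≤ (x + 1) ^ (-β) + 2 * (x + 1) ^ (-1 - β) := by
  have hx0 : 0 < x := by linarith
  have hx1 : 0 < x + 1 := by linarith
  have hp : 0 < x ^ β := Real.rpow_pos_of_pos hx0 _
  have hq : 0 < (x + 1) ^ β := Real.rpow_pos_of_pos hx1 _
  have h1 : ((x + 1) / x) ^ β ≤ (x + 1) / x := by
    have : 1 ≤ (x + 1) / x := by rw [le_div_iff₀ hx0]; linarith
    simpa using Real.rpow_le_rpow_of_exponent_le this hβ1.le
  have h2 : (x + 1) / x ≤ 1 + 2 * (x + 1)⁻¹ := by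
    rw [div_le_iff₀ hx0]
    field_simp
    nlinarith
  rw [Real.div_rpow hx1.le hx0.le] at h1
  rw [show -1 - β = -1 + -β by ring, Real.rpow_add hx1, Real.rpow_neg_one, Real.rpow_neg hx0.le,
    Real.rpow_neg hx1.le]
  have h3 := mul_le_mul_of_nonneg_right (h1.trans h2) (inv_pos.2 hq).le
  have h4 : (x + 1) ^ β / x ^ β * ((x + 1) ^ β)⁻¹ = (x ^ β)⁻¹ := by field_simp
  rw [h4] at h3
  linarith

theorem partial_sum_varpi_asymptotics (β : ℝ) (hβ0 : 0 < β) (hβ1 : β < 1) :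
    ∃ C : ℝ, 0 < C ∧ ∀ k : ℕ, 1 ≤ k →
      |(∑ j ∈ Finset.range k, varpi β j) - (k : ℝ) ^ (-β) / Real.Gamma (1 - β)| ≤
        C * (k : ℝ) ^ (-1 - β) := by
  have hg : 0 < Real.Gamma (1 - β) := Real.Gamma_pos_of_pos (by linarith)
  refine ⟨2 / Real.Gamma (1 - β) + 1, by positivity, ?_⟩
  intro k hk
  obtain ⟨n, rfl⟩ : ∃ n, k = n + 1 := ⟨k - 1, by omega⟩
  have hn : (0:ℝ) ≤ n := by positivity
  have hS := sum_eq_Gamma β hβ1 n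
  have hG : 0 < Real.Gamma ((n:ℝ) + 1) := Real.Gamma_pos_of_pos (by positivity)
  have hlow := Gamma_lower β hβ0 hβ1 (n + 1) (by linarith)
  rw [← hS, ← mul_assoc] at hlow
  have hlow' := le_of_mul_le_mul_right hlow hG
  have hp : 0 < ((n:ℝ) + 1) ^ (-1 - β) := Real.rpow_pos_of_pos (by positivity) _
  push_cast
  rw [abs_of_nonneg (by rw [sub_nonneg, div_le_iff₀ hg]; exact hlow')]
  rcases Nat.eq_zero_or_pos n with rfl | hpos
  · simp [varpi, genBinom]
    have : 0 < (Real.Gamma (1 - β))⁻¹ := by positivity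
    have : 0 < 2 / (Real.Gamma (1 - β)) := by positivity
    linarith
  · have hn1 : (1:ℝ) ≤ n := by exact_mod_cast hpos
    have hup := Gamma_upper β hβ0 hβ1 n hn1
    rw [← hS, ← mul_assoc] at hup
    have hup' := (le_of_mul_le_mul_right hup hG).trans (rpow_diff β hβ0 hβ1 n hn1)
    rw [← le_div_iff₀ hg, add_div] at hup'
    rw [add_mul, div_mul_eq_mul_div]
    linarith
end

section
/- Let τ > 0, t_j = jτ, and P_{k−j} = τ^β · ϱ_{k−j}. For every real μ > 0 and every integer k ≥ 1, μ · ∑_{j=0}^{k−1} P_{k−j} · E_β(μ · t_j^β) ≤ E_β(μ · t_k^β) − 1. -/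
open Finset

/-- The coefficients `ϱ_j = (−1)^j C(−β, j)` of `(1−z)^{−β}`. -/
noncomputable def varrho (β : ℝ) (j : ℕ) : ℝ := (-1 : ℝ) ^ j * genBinom (-β) j

/-- The Mittag-Leffler function `E_β(z) = ∑_{l=0}^∞ z^l / Γ(1 + lβ)`. -/
noncomputable def mittagLeffler (β z : ℝ) : ℝ :=
  ∑' l : ℕ, z ^ l / Real.Gamma (1 + (l : ℝ) * β)

lemma aux_varrho (β : ℝ) (hβ0 : 0 < β) (j : ℕ) :
    varrho β j = Real.Gamma (j + β) / (Real.Gamma β * (Nat.factorial j : ℝ)) := by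
  have hG := Real.Gamma_pos_of_pos hβ0
  induction j with
  | zero => simp [varrho, genBinom, hG.ne']
  | succ n ih =>
    have h1 : varrho β (n+1) = varrho β n * ((n + β) / (n + 1)) := by
      simp only [varrho, genBinom, Finset.prod_range_succ, Nat.factorial_succ, pow_succ]
      push_cast
      have : (Nat.factorial n : ℝ) ≠ 0 := by positivity
      have h2 : (n : ℝ) + 1 ≠ 0 := by positivity
      field_simp
      ring
    have h3 : Real.Gamma ((n + 1 : ℕ) + β) = (n + β) * Real.Gamma (n + β) := by
      rw [← Real.Gamma_add_one (by positivity)]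
      push_cast
      ring_nf
    rw [h1, ih, h3, Nat.factorial_succ]
    push_cast
    have : (Nat.factorial n : ℝ) ≠ 0 := by positivity
    have h2 : (n : ℝ) + 1 ≠ 0 := by positivity
    field_simp

lemma aux_varrho_le (β : ℝ) (hβ0 : 0 < β) (hβ1 : β < 1) (j : ℕ) (hj : 1 ≤ j) :
    varrho β j ≤ (j : ℝ) ^ (β - 1) / Real.Gamma β := by
  have hG := Real.Gamma_pos_of_pos hβ0
  have hj0 : (0 : ℝ) < j := by exact_mod_cast hj
  have hGj := Real.Gamma_pos_of_pos hj0
  rw [aux_varrho β hβ0]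
  have h := Real.Gamma_mul_add_mul_le_rpow_Gamma_mul_rpow_Gamma hj0 (by linarith : (0 : ℝ) < j + 1)
    (by linarith : 0 < 1 - β) hβ0 (by ring)
  have e1 : (1 - β) * (j : ℝ) + β * (j + 1) = j + β := by ring
  have e2 : Real.Gamma j ^ (1 - β) * Real.Gamma (j + 1) ^ β = Real.Gamma j * (j : ℝ) ^ β := by
    rw [Real.Gamma_add_one hj0.ne', Real.mul_rpow hj0.le hGj.le]
    have : Real.Gamma (j : ℝ) = Real.Gamma (j : ℝ) ^ (1 - β) * Real.Gamma (j : ℝ) ^ β := by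
      rw [← Real.rpow_add hGj]; simp
    nth_rewrite 3 [this]
    ring
  rw [e1, e2] at h
  have e3 : (Nat.factorial j : ℝ) = j * Real.Gamma j := by
    rw [← Real.Gamma_add_one hj0.ne', Real.Gamma_nat_eq_factorial]
  have e5 : Real.Gamma (j + β) / (Real.Gamma β * (Nat.factorial j : ℝ)) =
      Real.Gamma (j + β) / (Real.Gamma β * (j * Real.Gamma j)) := by rw [e3]
  rw [e5, Real.rpow_sub_one hj0.ne', div_div, div_le_div_iff₀ (by positivity) (by positivity)]
  nlinarith [mul_le_mul_of_nonneg_right h (by positivity : 0 ≤ (j : ℝ) * Real.Gamma β)]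

lemma aux_integrable (β γ a : ℝ) (hβ0 : 0 < β) (hγ : 0 ≤ γ) (c d : ℝ) :
    IntervalIntegrable (fun x : ℝ => x ^ γ * (a - x) ^ (β - 1)) MeasureTheory.volume c d := by
  apply IntervalIntegrable.continuousOn_mul
  · have := (intervalIntegral.intervalIntegrable_rpow' (a := a - c) (b := a - d)
      (by linarith : -1 < β - 1)).comp_sub_left a
    simpa using this
  · exact (Real.continuous_rpow_const hγ).continuousOn

lemma aux_beta (β γ a : ℝ) (hβ0 : 0 < β) (hγ : 0 ≤ γ) (ha : 0 < a) :
    ∫ x in (0 : ℝ)..a, x ^ γ * (a - x) ^ (β - 1) =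
      a ^ (γ + β) * (Real.Gamma (1 + γ) * Real.Gamma β / Real.Gamma (1 + γ + β)) := by
  have h := Complex.betaIntegral_scaled ((1 + γ : ℝ) : ℂ) (β : ℂ) ha
  rw [Complex.betaIntegral_eq_Gamma_mul_div _ _ (by simp; linarith) (by simpa)] at h
  have h2 : ∫ x in (0 : ℝ)..a, (x : ℂ) ^ (((1 + γ : ℝ) : ℂ) - 1) * ((a : ℂ) - x) ^ ((β : ℂ) - 1)
      = ∫ x in (0 : ℝ)..a, ((x ^ γ * (a - x) ^ (β - 1) : ℝ) : ℂ) := by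
    apply intervalIntegral.integral_congr
    intro x hx
    rw [Set.uIcc_of_le ha.le] at hx
    simp only
    rw [Complex.ofReal_mul, Complex.ofReal_cpow hx.1, Complex.ofReal_cpow (by linarith [hx.2])]
    push_cast
    ring_nf
  rw [h2, intervalIntegral.integral_ofReal] at h
  have e : ((1 + γ : ℝ) : ℂ) + (β : ℂ) - 1 = ((γ + β : ℝ) : ℂ) := by push_cast; ring
  rw [e, ← Complex.ofReal_cpow ha.le, ← Complex.ofReal_add, Complex.Gamma_ofReal,
    Complex.Gamma_ofReal, Complex.Gamma_ofReal] at h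
  exact_mod_cast h

lemma aux_sum (β γ : ℝ) (hβ0 : 0 < β) (hβ1 : β < 1) (hγ : 0 ≤ γ) (k : ℕ) (hk : 1 ≤ k) :
    ∑ j ∈ Finset.range k, varrho β (k - j) * (j : ℝ) ^ γ ≤
      (k : ℝ) ^ (γ + β) * Real.Gamma (1 + γ) / Real.Gamma (1 + γ + β) := by
  have hG := Real.Gamma_pos_of_pos hβ0
  have hk0 : (0 : ℝ) < k := by exact_mod_cast hk
  have h1 : ∑ j ∈ Finset.range k, (j : ℝ) ^ γ * ((k : ℝ) - j) ^ (β - 1) ≤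
      ∫ x in (0 : ℝ)..k, x ^ γ * (k - x) ^ (β - 1) := by
    have hs := intervalIntegral.sum_integral_adjacent_intervals (n := k)
      (a := fun n : ℕ => (n : ℝ)) (μ := MeasureTheory.volume)
      (f := fun x : ℝ => x ^ γ * ((k : ℝ) - x) ^ (β - 1))
      (fun i _ => aux_integrable β γ k hβ0 hγ _ _)
    simp only [Nat.cast_zero] at hs
    rw [← hs]
    apply Finset.sum_le_sum
    intro j hj
    have hjk : (j : ℝ) + 1 ≤ k := by exact_mod_cast Finset.mem_range.mp hj
    have hc : (j : ℝ) ^ γ * ((k : ℝ) - j) ^ (β - 1) =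
      ∫ _x in (j : ℝ)..((j + 1 : ℕ) : ℝ), (j : ℝ) ^ γ * ((k : ℝ) - j) ^ (β - 1) := by simp
    rw [hc]
    apply intervalIntegral.integral_mono_on_of_le_Ioo
    · push_cast; linarith
    · simp
    · exact aux_integrable β γ k hβ0 hγ _ _
    · intro x hx
      have hx1 := hx.1
      have hx2 := hx.2
      push_cast at hx2
      have hj0 : (0 : ℝ) ≤ j := by positivity
      apply mul_le_mul
      · exact Real.rpow_le_rpow hj0 hx1.le hγ
      · exact Real.rpow_le_rpow_of_nonpos (by linarith) (by linarith) (by linarith)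
      · exact Real.rpow_nonneg (by linarith) _
      · exact Real.rpow_nonneg (by linarith) _
  rw [aux_beta β γ k hβ0 hγ hk0] at h1
  calc _ ≤ ∑ j ∈ Finset.range k, (1 / Real.Gamma β) * ((j : ℝ) ^ γ * ((k : ℝ) - j) ^ (β - 1)) := by
        apply Finset.sum_le_sum
        intro j hj
        have hj := Finset.mem_range.mp hj
        have := aux_varrho_le β hβ0 hβ1 (k - j) (by omega)
        rw [Nat.cast_sub hj.le] at this
        calc _ ≤ _ := mul_le_mul_of_nonneg_right this (by positivity)
          _ = _ := by ring
    _ ≤ (1 / Real.Gamma β) * ((k : ℝ) ^ (γ + β) *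
        (Real.Gamma (1 + γ) * Real.Gamma β / Real.Gamma (1 + γ + β))) := by
        rw [← Finset.mul_sum]
        exact mul_le_mul_of_nonneg_left h1 (by positivity)
    _ = _ := by
        field_simp

lemma aux_ratio (β : ℝ) (hβ0 : 0 < β) (hβ1 : β < 1) (y : ℝ) (hy : 1 ≤ y) :
    Real.Gamma y / Real.Gamma (y + β) ≤ 2 * y ^ (-β) := by
  have hy0 : 0 < y := by linarith
  have hyb : 0 < y + β := by linarith
  have hG := Real.Gamma_pos_of_pos hyb
  have h := Real.Gamma_mul_add_mul_le_rpow_Gamma_mul_rpow_Gamma hyb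
    (by linarith : (0 : ℝ) < y + β + 1) hβ0 (by linarith : 0 < 1 - β) (by ring)
  have e1 : β * (y + β) + (1 - β) * (y + β + 1) = y + 1 := by ring
  have e2 : Real.Gamma (y + β) ^ β * Real.Gamma (y + β + 1) ^ (1 - β)
      = Real.Gamma (y + β) * (y + β) ^ (1 - β) := by
    rw [Real.Gamma_add_one hyb.ne', Real.mul_rpow hyb.le hG.le]
    have : Real.Gamma (y + β) = Real.Gamma (y + β) ^ β * Real.Gamma (y + β) ^ (1 - β) := by
      rw [← Real.rpow_add hG]; simp
    nth_rewrite 3 [this]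
    ring
  rw [e1, e2, Real.Gamma_add_one hy0.ne'] at h
  have h3 : (y + β) ^ (1 - β) ≤ 2 * y ^ (1 - β) := by
    calc (y + β) ^ (1 - β) ≤ (2 * y) ^ (1 - β) :=
          Real.rpow_le_rpow hyb.le (by linarith) (by linarith)
      _ = 2 ^ (1 - β) * y ^ (1 - β) := Real.mul_rpow (by norm_num) hy0.le
      _ ≤ 2 ^ (1 : ℝ) * y ^ (1 - β) := by
          gcongr
          · norm_num
          · linarith
      _ = _ := by simp
  have e4 : y ^ (1 - β) = y * y ^ (-β) := by
    rw [sub_eq_add_neg, Real.rpow_add hy0, Real.rpow_one]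
  rw [e4] at h3
  rw [div_le_iff₀ hG]
  have h5 := mul_le_mul_of_nonneg_left h3 hG.le
  have : y * Real.Gamma y ≤ y * (2 * y ^ (-β) * Real.Gamma (y + β)) := by linarith
  exact le_of_mul_le_mul_left this hy0

lemma aux_summable (β : ℝ) (hβ0 : 0 < β) (hβ1 : β < 1) (z : ℝ) :
    Summable (fun l : ℕ => z ^ l / Real.Gamma (1 + (l : ℝ) * β)) := by
  have hpos : ∀ l : ℕ, 0 < Real.Gamma (1 + (l : ℝ) * β) := fun l =>
    Real.Gamma_pos_of_pos (by positivity)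
  have ht : Filter.Tendsto (fun l : ℕ => |z| * (2 * (1 + (l : ℝ) * β) ^ (-β))) Filter.atTop
      (nhds (|z| * (2 * 0))) := by
    apply Filter.Tendsto.const_mul
    apply Filter.Tendsto.const_mul
    apply (tendsto_rpow_neg_atTop hβ0).comp
    apply Filter.tendsto_atTop_add_const_left
    exact tendsto_natCast_atTop_atTop.atTop_mul_const hβ0
  have hev := ht.eventually_le_const (u := 1 / 2) (by norm_num)
  apply summable_of_ratio_norm_eventually_le (r := 1 / 2) (by norm_num)
  filter_upwards [hev] with l hl
  have hr := aux_ratio β hβ0 hβ1 (1 + (l : ℝ) * β) (by nlinarith [mul_nonneg l.cast_nonneg hβ0.le])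
  have e : 1 + ((l + 1 : ℕ) : ℝ) * β = 1 + (l : ℝ) * β + β := by push_cast; ring
  have hp1 := hpos l
  have hp2 := hpos (l + 1)
  rw [e] at hp2 ⊢
  rw [norm_div, norm_div, norm_pow, norm_pow, Real.norm_eq_abs, Real.norm_of_nonneg hp1.le,
    Real.norm_of_nonneg hp2.le]
  calc |z| ^ (l + 1) / Real.Gamma (1 + l * β + β)
      = (|z| * (Real.Gamma (1 + l * β) / Real.Gamma (1 + l * β + β)))
        * (|z| ^ l / Real.Gamma (1 + l * β)) := by
        rw [pow_succ]
        field_simp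
    _ ≤ _ := by
        apply mul_le_mul_of_nonneg_right _ (by positivity)
        exact (mul_le_mul_of_nonneg_left hr (abs_nonneg z)).trans hl

theorem mittagLeffler_convolution_bound (β : ℝ) (hβ0 : 0 < β) (hβ1 : β < 1)
    (τ : ℝ) (hτ : 0 < τ) (μ : ℝ) (hμ : 0 < μ) (k : ℕ) (hk : 1 ≤ k) :
    μ * ∑ j ∈ Finset.range k,
          (τ ^ β * varrho β (k - j)) * mittagLeffler β (μ * ((j : ℝ) * τ) ^ β)
      ≤ mittagLeffler β (μ * ((k : ℝ) * τ) ^ β) - 1 := by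
  have hS := aux_summable β hβ0 hβ1
  have hpow : ∀ (j l : ℕ), (μ * ((j : ℝ) * τ) ^ β) ^ l
      = (μ * τ ^ β) ^ l * (j : ℝ) ^ ((l : ℝ) * β) := by
    intro j l
    rw [Real.mul_rpow (by positivity) hτ.le, mul_comm (l : ℝ) β, Real.rpow_mul (by positivity),
      Real.rpow_natCast]
    ring
  have hR : mittagLeffler β (μ * ((k : ℝ) * τ) ^ β) - 1 =
      ∑' l : ℕ, (μ * ((k : ℝ) * τ) ^ β) ^ (l + 1) / Real.Gamma (1 + ((l + 1 : ℕ) : ℝ) * β) := by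
    rw [mittagLeffler, (hS _).tsum_eq_zero_add]
    simp
  have hL : μ * ∑ j ∈ Finset.range k,
          (τ ^ β * varrho β (k - j)) * mittagLeffler β (μ * ((j : ℝ) * τ) ^ β) =
      ∑' l : ℕ, ∑ j ∈ Finset.range k, μ * ((τ ^ β * varrho β (k - j)) *
        ((μ * ((j : ℝ) * τ) ^ β) ^ l / Real.Gamma (1 + (l : ℝ) * β))) := by
    rw [Summable.tsum_finsetSum (fun j _ => ((hS _).mul_left _).mul_left _), Finset.mul_sum]
    apply Finset.sum_congr rfl
    intro j _
    rw [tsum_mul_left, tsum_mul_left, mittagLeffler]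
  rw [hL, hR]
  refine Summable.tsum_le_tsum ?_ (summable_sum (fun j _ => ((hS _).mul_left _).mul_left _))
    ((summable_nat_add_iff 1).mpr (hS _))
  intro l
  have hs := aux_sum β (l * β) hβ0 hβ1 (by positivity) k hk
  have hG1 : 0 < Real.Gamma (1 + (l : ℝ) * β) := Real.Gamma_pos_of_pos (by positivity)
  have hG2 : 0 < Real.Gamma (1 + (l : ℝ) * β + β) := Real.Gamma_pos_of_pos (by positivity)
  have e : ((l + 1 : ℕ) : ℝ) * β = (l : ℝ) * β + β := by push_cast; ring
  rw [hpow, e, ← add_assoc]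
  calc _ = ((μ * τ ^ β) ^ (l + 1) / Real.Gamma (1 + (l : ℝ) * β)) *
        ∑ j ∈ Finset.range k, varrho β (k - j) * (j : ℝ) ^ ((l : ℝ) * β) := by
        rw [Finset.mul_sum]
        apply Finset.sum_congr rfl
        intro j _
        rw [hpow]
        ring
    _ ≤ _ := mul_le_mul_of_nonneg_left hs (by positivity)
    _ = _ := by field_simp
end

section
/- (Discrete fractional Grönwall inequality.) Let n_T ≥ 1, θ ∈ [0,1], and let (g^k)_{k=0}^{n_T} and (λ_l)_{l=0}^{n_T−1} be nonnegative real sequences. Suppose λ ≥ 0 satisfies λ ≥ ∑_{l=0}^{n_T−1} λ_l and the step size satisfies τ ≤ (2λ(1+β))^{−1/β}. If a nonnegative sequence (v^k)_{k=0}^{n_T} satisfies, for all 1 ≤ k ≤ n_T, D^{(β)}_τ (v^k)² ≤ ∑_{l=1}^{k} λ_{k−l}·(v^l)² + v^{k−θ}·g^{k−θ}, then for all 1 ≤ k ≤ n_T, v^k ≤ 2·E_β(2λ·t_k^β)·( v^0 + max_{1≤m≤k} ∑_{j=1}^{m} P_{m−j}·g^{j−θ} ). -/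
open Finset

lemma fg_genBinom_eq (α : ℝ) (j : ℕ) : genBinom α j = Ring.choose α j := by
  have h := Ring.descPochhammer_eq_factorial_smul_choose α j
  have h2 : (descPochhammer ℤ j).smeval α = ∏ i ∈ Finset.range j, (α - i) := by
    induction j with
    | zero => simp
    | succ n ih =>
      rw [descPochhammer_succ_right, Polynomial.smeval_mul, ih (Ring.descPochhammer_eq_factorial_smul_choose α n), Finset.prod_range_succ]
      simp [Polynomial.smeval_sub, Polynomial.smeval_natCast]
  unfold genBinom
  rw [← h2, h, nsmul_eq_mul]
  field_simp

lemma fg_conv (β : ℝ) (n : ℕ) :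
    ∑ p ∈ Finset.HasAntidiagonal.antidiagonal n, varrho β p.1 * varpi β p.2 = if n = 0 then 1 else 0 := by
  have h := Ring.add_choose_eq (r := -β) (s := β) n (Commute.all _ _)
  rw [neg_add_cancel, Ring.choose_zero_ite] at h
  have : ∀ p ∈ Finset.HasAntidiagonal.antidiagonal n, varrho β p.1 * varpi β p.2
      = (-1 : ℝ) ^ n * (Ring.choose (-β) p.1 * Ring.choose β p.2) := by
    intro p hp
    rw [Finset.HasAntidiagonal.mem_antidiagonal] at hp
    rw [varrho, varpi, fg_genBinom_eq, fg_genBinom_eq, ← hp, pow_add]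
    ring
  rw [Finset.sum_congr rfl this, ← Finset.mul_sum, ← h]
  split_ifs with h0 <;> simp [h0]

lemma fg_inv (β : ℝ) (w : ℕ → ℝ) (k : ℕ) :
    ∑ j ∈ Finset.range (k + 1), varrho β (k - j) *
      ∑ i ∈ Finset.range (j + 1), varpi β (j - i) * w i = w k := by
  have hRV : (PowerSeries.mk (varrho β)) * (PowerSeries.mk (varpi β)) = 1 := by
    ext n
    rw [PowerSeries.coeff_mul, PowerSeries.coeff_one]
    simp only [PowerSeries.coeff_mk]
    exact fg_conv β n
  have h : (PowerSeries.mk (varpi β) * PowerSeries.mk w) * PowerSeries.mk (varrho β) = PowerSeries.mk w := by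
    rw [mul_comm, ← mul_assoc, hRV, one_mul]
  have hk := congrArg (PowerSeries.coeff k) h
  rw [PowerSeries.coeff_mul, Finset.Nat.sum_antidiagonal_eq_sum_range_succ_mk] at hk
  simp only [PowerSeries.coeff_mk] at hk
  rw [← hk]
  refine Finset.sum_congr rfl fun j _ => ?_
  rw [mul_comm (PowerSeries.mk (varpi β)), PowerSeries.coeff_mul, Finset.Nat.sum_antidiagonal_eq_sum_range_succ_mk]
  simp only [PowerSeries.coeff_mk]
  rw [mul_comm]
  congr 1
  exact Finset.sum_congr rfl fun i _ => mul_comm _ _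

lemma fg_wendel (y s : ℝ) (hy : 0 < y) (hs0 : 0 < s) (hs1 : s < 1) :
    Real.Gamma (y + s) ≤ Real.Gamma y * y ^ s := by
  have h := Real.Gamma_mul_add_mul_le_rpow_Gamma_mul_rpow_Gamma (s := y) (t := y + 1)
    (a := 1 - s) (b := s) hy (by linarith) (by linarith) hs0 (by ring)
  have e : (1 - s) * y + s * (y + 1) = y + s := by ring
  have hG := Real.Gamma_pos_of_pos hy
  rw [e, Real.Gamma_add_one hy.ne', Real.mul_rpow hy.le hG.le, mul_comm (y ^ s), ← mul_assoc,
    ← Real.rpow_add hG] at h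
  simpa using h

lemma fg_varrho_succ (β : ℝ) (m : ℕ) : varrho β (m + 1) = varrho β m * ((β + m) / (m + 1)) := by
  unfold varrho genBinom
  rw [Finset.prod_range_succ, Nat.factorial_succ, pow_succ]
  push_cast
  have : (Nat.factorial m : ℝ) ≠ 0 := by positivity
  field_simp
  ring

lemma fg_varrho_zero (β : ℝ) : varrho β 0 = 1 := by simp [varrho, genBinom]

lemma fg_varrho_eq (β : ℝ) (hβ : 0 < β) (m : ℕ) :
    varrho β m = Real.Gamma (m + β) / (Real.Gamma β * Real.Gamma (m + 1)) := by
  have hG := Real.Gamma_pos_of_pos hβ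
  induction m with
  | zero => simp [fg_varrho_zero, hG.ne']
  | succ n ih =>
    rw [fg_varrho_succ, ih]
    push_cast
    have h1 : (n : ℝ) + 1 + β = (n + β) + 1 := by ring
    have h2 : 0 < Real.Gamma ((n : ℝ) + 1) := Real.Gamma_pos_of_pos (by positivity)
    rw [h1, Real.Gamma_add_one (s := (n : ℝ) + β) (by positivity), Real.Gamma_add_one (s := (n : ℝ) + 1) (by positivity)]
    field_simp
    ring

lemma fg_varrho_nonneg (β : ℝ) (hβ : 0 < β) (m : ℕ) : 0 ≤ varrho β m := by
  rw [fg_varrho_eq β hβ]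
  have hG := Real.Gamma_pos_of_pos hβ
  have h2 : 0 < Real.Gamma ((m : ℝ) + 1) := Real.Gamma_pos_of_pos (by positivity)
  have h3 : 0 < Real.Gamma ((m : ℝ) + β) := Real.Gamma_pos_of_pos (by positivity)
  positivity

lemma fg_varrho_le (β : ℝ) (hβ : 0 < β) (hβ1 : β < 1) (m : ℕ) (hm : 1 ≤ m) :
    varrho β m ≤ (m : ℝ) ^ (β - 1) / Real.Gamma β := by
  have hm' : (0 : ℝ) < m := by exact_mod_cast hm
  rw [fg_varrho_eq β hβ, Real.Gamma_add_one hm'.ne', Real.rpow_sub hm', Real.rpow_one]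
  have hG := Real.Gamma_pos_of_pos hβ
  have hGm := Real.Gamma_pos_of_pos hm'
  have h := fg_wendel m β hm' hβ hβ1
  rw [div_div, div_le_div_iff₀ (by positivity) (by positivity)]
  calc _ ≤ (Real.Gamma m * (m : ℝ) ^ β) * (m * Real.Gamma β) := by gcongr
    _ = _ := by ring

lemma fg_beta_int (β a : ℝ) (hβ : 0 < β) (ha : 0 ≤ a) (K : ℝ) (hK : 0 < K) :
    ∫ x in (0:ℝ)..K, x ^ a * (K - x) ^ (β - 1)
      = K ^ (a + β) * (Real.Gamma (1 + a) * Real.Gamma β / Real.Gamma (1 + a + β)) := by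
  have h := Complex.betaIntegral_scaled ((1 + a : ℝ) : ℂ) (β : ℂ) hK
  have hb : Complex.betaIntegral ((1 + a : ℝ) : ℂ) (β : ℂ)
      = ((Real.Gamma (1 + a) * Real.Gamma β / Real.Gamma (1 + a + β) : ℝ) : ℂ) := by
    rw [Complex.betaIntegral_eq_Gamma_mul_div _ _ (by simpa using by linarith) (by simpa using hβ)]
    rw [← Complex.ofReal_add, Complex.Gamma_ofReal, Complex.Gamma_ofReal, Complex.Gamma_ofReal]
    push_cast
    rfl
  have hl : ∫ x in (0:ℝ)..K, (x : ℂ) ^ (((1 + a : ℝ) : ℂ) - 1) * ((K : ℂ) - x) ^ ((β : ℂ) - 1)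
      = ∫ x in (0:ℝ)..K, ((x ^ a * (K - x) ^ (β - 1) : ℝ) : ℂ) := by
    apply intervalIntegral.integral_congr
    intro x hx
    rw [Set.uIcc_of_le hK.le] at hx
    simp only
    rw [Complex.ofReal_mul, Complex.ofReal_cpow hx.1, Complex.ofReal_cpow (by linarith [hx.2])]
    push_cast
    congr 2
    ring
  rw [hl, intervalIntegral.integral_ofReal, hb] at h
  have e : (K : ℂ) ^ (((1 + a : ℝ) : ℂ) + (β : ℂ) - 1) = ((K ^ (a + β) : ℝ) : ℂ) := by
    rw [Complex.ofReal_cpow hK.le]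
    congr 1
    push_cast
    ring
  rw [e, ← Complex.ofReal_mul] at h
  exact_mod_cast h

lemma fg_beta_intble (β a : ℝ) (hβ : 0 < β) (ha : 0 ≤ a) (K : ℝ) :
    IntervalIntegrable (fun x : ℝ => x ^ a * (K - x) ^ (β - 1)) MeasureTheory.volume 0 K := by
  have h1 : IntervalIntegrable (fun x : ℝ => x ^ (β - 1)) MeasureTheory.volume 0 K :=
    intervalIntegral.intervalIntegrable_rpow' (by linarith)
  have h2 := (h1.comp_sub_left K).symm
  simp only [sub_zero, sub_self] at h2
  exact h2.continuousOn_mul (Real.continuous_rpow_const ha).continuousOn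

lemma fg_sum_le (β a : ℝ) (hβ : 0 < β) (hβ1 : β < 1) (ha : 0 ≤ a) (k : ℕ) (hk : 1 ≤ k) :
    ∑ j ∈ Finset.range k, (j : ℝ) ^ a * ((k : ℝ) - j) ^ (β - 1)
      ≤ (k : ℝ) ^ (a + β) * (Real.Gamma (1 + a) * Real.Gamma β / Real.Gamma (1 + a + β)) := by
  have hk' : (0 : ℝ) < k := by exact_mod_cast hk
  rw [← fg_beta_int β a hβ ha k hk']
  have hint : ∀ j < k, IntervalIntegrable (fun x : ℝ => x ^ a * ((k : ℝ) - x) ^ (β - 1))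
      MeasureTheory.volume ((j : ℕ) : ℝ) ((j + 1 : ℕ) : ℝ) := by
    intro j hj
    have hj1 : ((j + 1 : ℕ) : ℝ) ≤ k := by exact_mod_cast hj
    refine (fg_beta_intble β a hβ ha k).mono_set ?_
    rw [Set.uIcc_of_le (by exact_mod_cast Nat.le_succ j), Set.uIcc_of_le hk'.le]
    exact Set.Icc_subset_Icc (by positivity) hj1
  have hs := intervalIntegral.sum_integral_adjacent_intervals (a := fun j : ℕ => (j : ℝ)) hint
  simp only [Nat.cast_zero] at hs
  rw [← hs]
  refine Finset.sum_le_sum fun j hj => ?_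
  have hj := Finset.mem_range.mp hj
  have hj1 : ((j + 1 : ℕ) : ℝ) ≤ k := by exact_mod_cast hj
  have hjj : (j : ℝ) ≤ ((j + 1 : ℕ) : ℝ) := by exact_mod_cast Nat.le_succ j
  have hc : (j : ℝ) ^ a * ((k : ℝ) - j) ^ (β - 1)
      = ∫ x in (j : ℝ)..((j + 1 : ℕ) : ℝ), (j : ℝ) ^ a * ((k : ℝ) - j) ^ (β - 1) := by
    simp
  rw [hc]
  refine intervalIntegral.integral_mono_on_of_le_Ioo hjj (by simp) (hint j hj) ?_
  intro x hx
  have hx2 : 0 < (k : ℝ) - x := by linarith [hx.2]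
  have hj0 : (0:ℝ) ≤ j := by positivity
  have hx1 := hx.1
  refine mul_le_mul (Real.rpow_le_rpow hj0 hx1.le ha) ?_ (Real.rpow_nonneg (by linarith) _)
    (Real.rpow_nonneg (by linarith) _)
  exact Real.rpow_le_rpow_of_nonpos hx2 (by linarith) (by linarith)

lemma fg_ml_summable (β z : ℝ) (hβ : 0 < β) (hβ1 : β < 1) (hz : 0 < z) :
    Summable (fun l : ℕ => z ^ l / Real.Gamma (1 + (l : ℝ) * β)) := by
  have hG : ∀ l : ℕ, 0 < Real.Gamma (1 + (l : ℝ) * β) := fun l =>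
    Real.Gamma_pos_of_pos (by positivity)
  refine summable_of_ratio_test_tendsto_lt_one (l := 0) one_pos
    (Filter.Eventually.of_forall fun l => (div_pos (pow_pos hz l) (hG l)).ne') ?_
  have hb : ∀ l : ℕ, ‖z ^ (l + 1) / Real.Gamma (1 + ((l + 1 : ℕ) : ℝ) * β)‖ /
      ‖z ^ l / Real.Gamma (1 + (l : ℝ) * β)‖ ≤ 2 * z * (1 + (l : ℝ) * β) ^ (-β) := by
    intro l
    rw [Real.norm_of_nonneg (div_pos (pow_pos hz _) (hG _)).le,
      Real.norm_of_nonneg (div_pos (pow_pos hz _) (hG _)).le]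
    have hGl := hG l
    have hGl1 := hG (l + 1)
    have e : 1 + ((l + 1 : ℕ) : ℝ) * β = 1 + (l : ℝ) * β + β := by push_cast; ring
    rw [e] at hGl1 ⊢
    set x := 1 + (l : ℝ) * β with hx
    have hx1 : 1 ≤ x := by rw [hx]; nlinarith [mul_nonneg (Nat.cast_nonneg (α := ℝ) l) hβ.le]
    have hx0 : 0 < x := by linarith
    have h := fg_wendel (x + β) (1 - β) (by linarith) (by linarith) (by linarith)
    have e2 : x + β + (1 - β) = x + 1 := by ring
    rw [e2, Real.Gamma_add_one hx0.ne'] at h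
    have h3 : (x + β) ^ (1 - β) ≤ 2 * x * x ^ (-β) := by
      calc (x + β) ^ (1 - β) ≤ (2 * x) ^ (1 - β) :=
            Real.rpow_le_rpow (by linarith) (by linarith) (by linarith)
        _ = 2 ^ (1 - β) * x ^ (1 - β) := Real.mul_rpow (by norm_num) hx0.le
        _ ≤ 2 ^ (1 : ℝ) * x ^ (1 - β) := by
            gcongr
            · norm_num
            · linarith
        _ = 2 * x * x ^ (-β) := by
            rw [Real.rpow_one, sub_eq_add_neg, Real.rpow_add hx0, Real.rpow_one]; ring
    have h4 : Real.Gamma x ≤ Real.Gamma (x + β) * (2 * x ^ (-β)) := by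
      have : x * Real.Gamma x ≤ x * (Real.Gamma (x + β) * (2 * x ^ (-β))) := by
        calc _ ≤ _ := h
          _ ≤ Real.Gamma (x + β) * (2 * x * x ^ (-β)) := by gcongr
          _ = _ := by ring
      exact le_of_mul_le_mul_left this hx0
    have e5 : z ^ (l + 1) / Real.Gamma (x + β) / (z ^ l / Real.Gamma x)
        = z * Real.Gamma x / Real.Gamma (x + β) := by
      rw [pow_succ]; field_simp
    rw [e5, div_le_iff₀ hGl1]
    calc z * Real.Gamma x ≤ z * (Real.Gamma (x + β) * (2 * x ^ (-β))) := by gcongr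
      _ = _ := by ring
  refine squeeze_zero (fun l => by positivity) hb ?_
  have t1 : Filter.Tendsto (fun l : ℕ => 1 + (l : ℝ) * β) Filter.atTop Filter.atTop :=
    Filter.tendsto_atTop_add_const_left _ _
      (tendsto_natCast_atTop_atTop.atTop_mul_const hβ)
  have t2 := ((tendsto_rpow_neg_atTop hβ).comp t1).const_mul (2 * z)
  simpa using t2

lemma fg_ml_mono (β y z : ℝ) (hβ : 0 < β) (hβ1 : β < 1) (hy : 0 < y) (hyz : y ≤ z) :
    mittagLeffler β y ≤ mittagLeffler β z := by
  unfold mittagLeffler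
  refine (fg_ml_summable β y hβ hβ1 hy).tsum_le_tsum (fun l => ?_)
    (fg_ml_summable β z hβ hβ1 (by linarith))
  have := Real.Gamma_pos_of_pos (s := 1 + (l : ℝ) * β) (by positivity)
  gcongr

lemma fg_ml_one_le (β z : ℝ) (hβ : 0 < β) (hβ1 : β < 1) (hz : 0 < z) :
    1 ≤ mittagLeffler β z := by
  unfold mittagLeffler
  have h := (fg_ml_summable β z hβ hβ1 hz).le_tsum 0 (fun l _ => by
    have := Real.Gamma_pos_of_pos (s := 1 + (l : ℝ) * β) (by positivity)
    positivity)
  simpa using h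

lemma fg_term (β τ : ℝ) (hβ : 0 < β) (hβ1 : β < 1) (hτ : 0 < τ) (k : ℕ) (hk : 1 ≤ k)
    (mu : ℝ) (hmu : 0 < mu) (l : ℕ) :
    mu * ∑ j ∈ Finset.Ico 1 k, τ ^ β * varrho β (k - j) *
      ((mu * ((j : ℝ) * τ) ^ β) ^ l / Real.Gamma (1 + (l : ℝ) * β))
      ≤ (mu * ((k : ℝ) * τ) ^ β) ^ (l + 1) / Real.Gamma (1 + ((l + 1 : ℕ) : ℝ) * β) := by
  have ha : 0 ≤ (l : ℝ) * β := by positivity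
  have hs := fg_sum_le β (l * β) hβ hβ1 ha k hk
  have e : 1 + ((l + 1 : ℕ) : ℝ) * β = 1 + (l : ℝ) * β + β := by push_cast; ring
  have hGb := Real.Gamma_pos_of_pos hβ
  have hG1 := Real.Gamma_pos_of_pos (s := 1 + (l : ℝ) * β) (by positivity)
  have hG2 := Real.Gamma_pos_of_pos (s := 1 + (l : ℝ) * β + β) (by positivity)
  rw [e]
  have pw : ∀ (j : ℕ) (n : ℕ), (mu * ((j : ℝ) * τ) ^ β) ^ n
      = mu ^ n * (τ ^ β) ^ n * (j : ℝ) ^ ((n : ℝ) * β) := by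
    intro j n
    rw [Real.mul_rpow (by positivity) hτ.le, mul_pow, mul_pow, ← Real.rpow_natCast ((j : ℝ) ^ β),
      ← Real.rpow_mul (by positivity), mul_comm β]
    ring
  have hT : 0 < τ ^ β := Real.rpow_pos_of_pos hτ β
  set T := τ ^ β
  have step : ∀ j ∈ Finset.Ico 1 k, T * varrho β (k - j) *
      ((mu * ((j : ℝ) * τ) ^ β) ^ l / Real.Gamma (1 + (l : ℝ) * β))
      ≤ (mu ^ l * T ^ (l + 1) / (Real.Gamma β * Real.Gamma (1 + (l : ℝ) * β))) *
        ((j : ℝ) ^ ((l : ℝ) * β) * ((k : ℝ) - j) ^ (β - 1)) := by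
    intro j hj
    rw [Finset.mem_Ico] at hj
    have hv := fg_varrho_le β hβ hβ1 (k - j) (by omega)
    rw [Nat.cast_sub hj.2.le] at hv
    rw [pw]
    have hjp : 0 ≤ (j : ℝ) ^ ((l : ℝ) * β) := by positivity
    calc _ ≤ T * (((k : ℝ) - j) ^ (β - 1) / Real.Gamma β) *
        (mu ^ l * T ^ l * (j : ℝ) ^ ((l : ℝ) * β) / Real.Gamma (1 + (l : ℝ) * β)) := by gcongr
      _ = _ := by
        field_simp
        ring
  calc _ ≤ mu * ∑ j ∈ Finset.Ico 1 k,
        (mu ^ l * T ^ (l + 1) / (Real.Gamma β * Real.Gamma (1 + (l : ℝ) * β))) *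
        ((j : ℝ) ^ ((l : ℝ) * β) * ((k : ℝ) - j) ^ (β - 1)) := by
        exact mul_le_mul_of_nonneg_left (Finset.sum_le_sum step) hmu.le
    _ ≤ mu * ((mu ^ l * T ^ (l + 1) / (Real.Gamma β * Real.Gamma (1 + (l : ℝ) * β))) *
        ((k : ℝ) ^ (l * β + β) * (Real.Gamma (1 + l * β) * Real.Gamma β / Real.Gamma (1 + l * β + β)))) := by
        rw [← Finset.mul_sum]
        gcongr
        refine le_trans (Finset.sum_le_sum_of_subset_of_nonneg ?_ ?_) hs
        · intro j hj
          simp only [Finset.mem_Ico, Finset.mem_range] at *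
          omega
        · intro j hj _
          have : (j : ℝ) ≤ k := by exact_mod_cast (Finset.mem_range.mp hj).le
          exact mul_nonneg (Real.rpow_nonneg (by positivity) _) (Real.rpow_nonneg (by linarith) _)
    _ = _ := by
        rw [pw]
        have : ((l + 1 : ℕ) : ℝ) * β = l * β + β := by push_cast; ring
        rw [this]
        field_simp
        ring

lemma fg_ml_sum (β τ : ℝ) (hβ : 0 < β) (hβ1 : β < 1) (hτ : 0 < τ) (k : ℕ) (hk : 1 ≤ k)
    (mu : ℝ) (hmu : 0 < mu) :
    1 + mu * ∑ j ∈ Finset.Ico 1 k, τ ^ β * varrho β (k - j) *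
      mittagLeffler β (mu * ((j : ℝ) * τ) ^ β) ≤ mittagLeffler β (mu * ((k : ℝ) * τ) ^ β) := by
  have hz : ∀ j : ℕ, 1 ≤ j → 0 < mu * ((j : ℝ) * τ) ^ β := fun j hj => by
    have : (0 : ℝ) < j := by exact_mod_cast hj
    positivity
  have hsm : ∀ j ∈ Finset.Ico 1 k, Summable (fun l : ℕ => τ ^ β * varrho β (k - j) *
      ((mu * ((j : ℝ) * τ) ^ β) ^ l / Real.Gamma (1 + (l : ℝ) * β))) := fun j hj =>
    (fg_ml_summable β _ hβ hβ1 (hz j (Finset.mem_Ico.mp hj).1)).mul_left _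
  have hk0 := fg_ml_summable β _ hβ hβ1 (hz k hk)
  have e1 : mu * ∑ j ∈ Finset.Ico 1 k, τ ^ β * varrho β (k - j) *
      mittagLeffler β (mu * ((j : ℝ) * τ) ^ β) =
      ∑' l : ℕ, mu * ∑ j ∈ Finset.Ico 1 k, τ ^ β * varrho β (k - j) *
      ((mu * ((j : ℝ) * τ) ^ β) ^ l / Real.Gamma (1 + (l : ℝ) * β)) := by
    rw [tsum_mul_left, Summable.tsum_finsetSum hsm]
    simp only [tsum_mul_left, mittagLeffler]
  rw [e1]
  conv_rhs => rw [mittagLeffler, hk0.tsum_eq_zero_add]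
  have : (mu * ((k : ℝ) * τ) ^ β) ^ 0 / Real.Gamma (1 + ((0 : ℕ) : ℝ) * β) = 1 := by simp
  rw [this]
  gcongr
  · exact (summable_sum hsm).mul_left _
  · exact (summable_nat_add_iff 1).mpr hk0
  · exact fg_term β τ hβ hβ1 hτ k hk mu hmu _

/-- Discrete fractional Grönwall inequality. -/
theorem discrete_fractional_gronwall (β τ θ : ℝ) (hβ0 : 0 < β) (hβ1 : β < 1)
    (hτ : 0 < τ) (hθ0 : 0 ≤ θ) (hθ1 : θ ≤ 1)
    (nT : ℕ) (hnT : 1 ≤ nT)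
    (g v lam : ℕ → ℝ) (lambda : ℝ)
    (hg : ∀ k ≤ nT, 0 ≤ g k) (hlam : ∀ l < nT, 0 ≤ lam l)
    (hlambda : 0 ≤ lambda)
    (hsum : ∑ l ∈ Finset.range nT, lam l ≤ lambda)
    (hstep : τ ≤ (2 * lambda * (1 + β)) ^ (-(1 / β)))
    (hv : ∀ k ≤ nT, 0 ≤ v k)
    (hineq : ∀ k : ℕ, 1 ≤ k → k ≤ nT →
      τ ^ (-β) * ∑ j ∈ Finset.range (k + 1), varpi β (k - j) * ((v j) ^ 2 - (v 0) ^ 2)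
        ≤ (∑ l ∈ Finset.Icc 1 k, lam (k - l) * (v l) ^ 2)
          + ((1 - θ) * v k + θ * v (k - 1)) * ((1 - θ) * g k + θ * g (k - 1))) :
    ∀ k : ℕ, ∀ hk : 1 ≤ k, k ≤ nT →
      v k ≤ 2 * mittagLeffler β (2 * lambda * ((k : ℝ) * τ) ^ β) *
        (v 0 + (Finset.Icc 1 k).sup' (Finset.nonempty_Icc.mpr hk)
          (fun m => ∑ j ∈ Finset.Icc 1 m,
            τ ^ β * varrho β (m - j) * ((1 - θ) * g j + θ * g (j - 1)))) := by
  have hlam0 : 0 < lambda := by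
    rcases hlambda.lt_or_eq with h | h
    · exact h
    · exfalso
      rw [← h, mul_zero, zero_mul, Real.zero_rpow (by
        have : 0 < 1 / β := by positivity
        linarith)] at hstep
      linarith
  have hT : 0 < τ ^ β := Real.rpow_pos_of_pos hτ β
  have hTlam : τ ^ β * lambda ≤ 1 / 2 := by
    have hpos : 0 < 2 * lambda * (1 + β) := by positivity
    have h1 : τ ^ β ≤ (2 * lambda * (1 + β))⁻¹ := by
      calc τ ^ β ≤ ((2 * lambda * (1 + β)) ^ (-(1 / β))) ^ β :=
            Real.rpow_le_rpow hτ.le hstep hβ0.le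
        _ = (2 * lambda * (1 + β))⁻¹ := by
            rw [← Real.rpow_mul hpos.le]
            have : -(1 / β) * β = -1 := by field_simp
            rw [this, Real.rpow_neg_one]
    have h2 : (2 * lambda * (1 + β))⁻¹ ≤ (2 * lambda)⁻¹ := by
      apply inv_anti₀ (by positivity)
      nlinarith
    calc τ ^ β * lambda ≤ (2 * lambda)⁻¹ * lambda := by
          gcongr
          exact h1.trans h2
      _ = 1 / 2 := by field_simp
  have hrho := fg_varrho_nonneg β hβ0
  set gt : ℕ → ℝ := fun j => (1 - θ) * g j + θ * g (j - 1) with hgt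
  have hgt0 : ∀ j ≤ nT, 0 ≤ gt j := fun j hj => by
    have h1 := hg j hj
    have h2 := hg (j - 1) (by omega)
    have : 0 ≤ 1 - θ := by linarith
    simp only [hgt]
    positivity
  set S : ℕ → ℝ := fun m => ∑ j ∈ Finset.Icc 1 m, τ ^ β * varrho β (m - j) * gt j with hS
  have hS0 : ∀ m ≤ nT, 0 ≤ S m := fun m hm => Finset.sum_nonneg fun j hj => by
    have := hgt0 j ((Finset.mem_Icc.mp hj).2.trans hm)
    have := hrho (m - j)
    positivity
  set E : ℕ → ℝ := fun k => mittagLeffler β (2 * lambda * ((k : ℝ) * τ) ^ β) with hE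
  have hzpos : ∀ k : ℕ, 1 ≤ k → 0 < 2 * lambda * ((k : ℝ) * τ) ^ β := fun k hk => by
    have : (0 : ℝ) < k := by exact_mod_cast hk
    positivity
  have hE1 : ∀ k, 1 ≤ k → 1 ≤ E k := fun k hk => fg_ml_one_le β _ hβ0 hβ1 (hzpos k hk)
  have hEmono : ∀ j k, 1 ≤ j → j ≤ k → E j ≤ E k := fun j k hj hjk => by
    refine fg_ml_mono β _ _ hβ0 hβ1 (hzpos j hj) ?_
    have : (j : ℝ) ≤ k := by exact_mod_cast hjk
    gcongr
  have hlsum : ∀ j ≤ nT, ∑ l ∈ Finset.Icc 1 j, lam (j - l) ≤ lambda := fun j hj => by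
    have h1 : ∑ l ∈ Finset.Icc 1 j, lam (j - l) = ∑ l ∈ Finset.range j, lam l := by
      refine Finset.sum_bij' (fun l _ => j - l) (fun l _ => j - l) ?_ ?_ ?_ ?_ ?_ <;>
        intro l hl <;> simp only [Finset.mem_Icc, Finset.mem_range] at * <;> omega
    rw [h1]
    refine le_trans (Finset.sum_le_sum_of_subset_of_nonneg
      (Finset.range_mono hj) fun l hl _ => hlam l (Finset.mem_range.mp hl)) hsum
  have hlbound : ∀ j ≤ nT, ∀ B : ℝ, 0 ≤ B → (∀ l, 1 ≤ l → l ≤ j → v l ^ 2 ≤ B) →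
      ∑ l ∈ Finset.Icc 1 j, lam (j - l) * v l ^ 2 ≤ lambda * B := fun j hj B hB hb => by
    calc _ ≤ ∑ l ∈ Finset.Icc 1 j, lam (j - l) * B := by
          refine Finset.sum_le_sum fun l hl => ?_
          have hl := Finset.mem_Icc.mp hl
          exact mul_le_mul_of_nonneg_left (hb l hl.1 hl.2) (hlam _ (by omega))
      _ = (∑ l ∈ Finset.Icc 1 j, lam (j - l)) * B := by rw [Finset.sum_mul]
      _ ≤ lambda * B := mul_le_mul_of_nonneg_right (hlsum j hj) hB
  intro k
  induction k using Nat.strong_induction_on with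
  | _ k ih =>
  intro hk hkn
  set G : ℝ := v 0 + (Finset.Icc 1 k).sup' (Finset.nonempty_Icc.mpr hk) S with hG
  have hSk : ∀ m, 1 ≤ m → m ≤ k → S m ≤ G - v 0 := fun m h1 h2 => by
    have := Finset.le_sup' S (Finset.mem_Icc.mpr ⟨h1, h2⟩)
    linarith
  have hv0 : 0 ≤ v 0 := hv 0 (by omega)
  have hGv : v 0 ≤ G := by
    have := hSk k hk le_rfl
    have := hS0 k hkn
    linarith
  have hG0 : 0 ≤ G := hv0.trans hGv
  have ih' : ∀ j, 1 ≤ j → j < k → v j ≤ 2 * E j * G := fun j hj hjk => by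
    refine (ih j hjk hj (by omega)).trans ?_
    have hEj := hE1 j hj
    refine mul_le_mul_of_nonneg_left ?_ (by simp only [hE] at hEj; linarith)
    simp only [hG]
    gcongr
  have hEk := hE1 k hk
  change v k ≤ 2 * E k * G
  by_cases hmax : ∃ j < k, v k < v j
  · obtain ⟨j, hjk, hj⟩ := hmax
    rcases Nat.eq_zero_or_pos j with rfl | hj0
    · nlinarith
    · have h1 := ih' j hj0 hjk
      have h2 := hEmono j k hj0 hjk.le
      have : 2 * E j * G ≤ 2 * E k * G := by gcongr
      linarith
  push Not at hmax
  have hle : ∀ j ≤ k, v j ≤ v k := fun j hj => by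
    rcases hj.lt_or_eq with h | rfl
    · exact hmax j h
    · exact le_rfl
  rcases (hv k hkn).lt_or_eq with hV | hV
  swap
  · rw [← hV]; positivity
  set V := v k with hVdef
  -- the summed inequality
  have hinv := fg_inv β (fun i => v i ^ 2 - v 0 ^ 2) k
  have hterm : ∀ j, 1 ≤ j → j ≤ k → ∀ B : ℝ, 0 ≤ B → (∀ l, 1 ≤ l → l ≤ j → v l ≤ B) →
      varrho β (k - j) * ∑ i ∈ Finset.range (j + 1), varpi β (j - i) * (v i ^ 2 - v 0 ^ 2)
        ≤ V * (τ ^ β * varrho β (k - j) * gt j) + V * (lambda * (τ ^ β * varrho β (k - j) * B)) := by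
    intro j h1 hjk B hB hb
    have hi := hineq j h1 (by omega)
    have hL := hlbound j (by omega) (V * B) (by positivity) (fun l hl1 hl2 => by
      rw [sq]
      exact mul_le_mul (hle l (by omega)) (hb l hl1 hl2) (hv l (by omega)) hV.le)
    have hvt : ((1 - θ) * v j + θ * v (j - 1)) * gt j ≤ V * gt j := by
      refine mul_le_mul_of_nonneg_right ?_ (hgt0 j (by omega))
      have := hle j hjk
      have := hle (j - 1) (by omega)
      nlinarith
    set Q := ∑ i ∈ Finset.range (j + 1), varpi β (j - i) * (v i ^ 2 - v 0 ^ 2)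
    have hQ : Q ≤ τ ^ β * (lambda * (V * B) + V * gt j) := by
      have h3 : τ ^ (-β) * Q ≤ lambda * (V * B) + V * gt j := hi.trans (add_le_add hL hvt)
      have h4 : Q = τ ^ β * (τ ^ (-β) * Q) := by
        rw [← mul_assoc, ← Real.rpow_add hτ]; simp
      rw [h4]
      gcongr
    calc _ ≤ varrho β (k - j) * (τ ^ β * (lambda * (V * B) + V * gt j)) :=
          mul_le_mul_of_nonneg_left hQ (hrho _)
      _ = _ := by ring
  have hsplit : ∀ f : ℕ → ℝ, f 0 = 0 → ∑ j ∈ Finset.range (k + 1), f j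
      = ∑ j ∈ Finset.Ico 1 k, f j + f k := fun f hf => by
    rw [Finset.sum_range_succ, Finset.range_eq_Ico, Finset.sum_eq_sum_Ico_succ_bot (by omega), hf]
    simp
  have hsplit2 : S k = ∑ j ∈ Finset.Ico 1 k, τ ^ β * varrho β (k - j) * gt j + τ ^ β * gt k := by
    simp only [hS]
    rw [← Finset.Ico_succ_right_eq_Icc]
    simp only [Order.succ_eq_add_one]
    rw [Finset.sum_Ico_succ_top hk, Nat.sub_self, fg_varrho_zero, mul_one]
  rw [hsplit _ (by simp)] at hinv
  have hlast := hterm k hk le_rfl V hV.le (fun l _ hl => hle l hl)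
  have hfirst : ∑ j ∈ Finset.Ico 1 k, varrho β (k - j) *
      ∑ i ∈ Finset.range (j + 1), varpi β (j - i) * (v i ^ 2 - v 0 ^ 2)
      ≤ V * ∑ j ∈ Finset.Ico 1 k, τ ^ β * varrho β (k - j) * gt j
        + V * (G * (2 * lambda * ∑ j ∈ Finset.Ico 1 k, τ ^ β * varrho β (k - j) * E j)) := by
    rw [Finset.mul_sum, Finset.mul_sum, Finset.mul_sum, Finset.mul_sum, ← Finset.sum_add_distrib]
    refine Finset.sum_le_sum fun j hj => ?_
    have hj := Finset.mem_Ico.mp hj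
    have hEj := hE1 j hj.1
    refine (hterm j hj.1 hj.2.le (2 * E j * G) (by positivity) fun l hl1 hl2 => ?_).trans
      (le_of_eq (by ring))
    refine (ih' l hl1 (by omega)).trans ?_
    have := hEmono l j hl1 hl2
    gcongr
  have hml := fg_ml_sum β τ hβ0 hβ1 hτ k hk (2 * lambda) (by positivity)
  change 1 + 2 * lambda * ∑ j ∈ Finset.Ico 1 k, τ ^ β * varrho β (k - j) * E j ≤ E k at hml
  rw [Nat.sub_self, fg_varrho_zero] at hlast hinv
  have hSkk := hSk k hk le_rfl
  have h0k := hle 0 (by omega)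
  set X := 2 * lambda * ∑ j ∈ Finset.Ico 1 k, τ ^ β * varrho β (k - j) * E j
  have hGX : G * (1 + X) ≤ G * E k := mul_le_mul_of_nonneg_left hml hG0
  have hTV : τ ^ β * lambda * V ≤ 1 / 2 * V := mul_le_mul_of_nonneg_right hTlam hV.le
  have h00 : v 0 ^ 2 ≤ V * v 0 := by rw [sq]; exact mul_le_mul_of_nonneg_right h0k hv0
  have hfin : V * V ≤ V * (v 0 + S k + G * X + 1 / 2 * V) := by
    have : V * (τ ^ β * lambda * V) ≤ V * (1 / 2 * V) := mul_le_mul_of_nonneg_left hTV hV.le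
    rw [hsplit2]
    nlinarith
  have := le_of_mul_le_mul_left hfin hV
  linarith
end

section
/- (Grönwall inequality without step-size restriction.) Let n_T ≥ 1, let (g^k)_{k=1}^{n_T} be a nonnegative real sequence, and let τ > 0 be arbitrary. If a nonnegative sequence (v^k)_{k=0}^{n_T} satisfies D^{(β)}_τ (v^k)² ≤ v^k·g^k for all 1 ≤ k ≤ n_T, then for all 1 ≤ k ≤ n_T, v^k ≤ 2·( v^0 + max_{1≤m≤k} ∑_{j=1}^{m} P_{m−j}·g^j ). -/
open Finset

theorem genBinom_eq_choose (a : ℝ) (n : ℕ) : genBinom a n = Ring.choose a n := by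
  have h : (descPochhammer ℤ n).smeval a = ∏ i ∈ Finset.range n, (a - i) := by
    induction n with
    | zero => simp
    | succ n ih =>
      rw [descPochhammer_succ_right, Polynomial.smeval_mul, ih, Finset.prod_range_succ]
      simp [Polynomial.smeval_sub, Polynomial.smeval_natCast]
  rw [Ring.choose_eq_smul, h, genBinom, smul_eq_mul]
  ring

theorem varrho_nonneg (β : ℝ) (hβ : 0 < β) (n : ℕ) : 0 ≤ varrho β n := by
  have h : (-1 : ℝ) ^ n * ∏ i ∈ Finset.range n, (-β - i) = ∏ i ∈ Finset.range n, (β + i) := by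
    induction n with
    | zero => simp
    | succ n ih =>
      rw [Finset.prod_range_succ, Finset.prod_range_succ, ← ih]
      ring
  rw [varrho, genBinom, ← mul_div_assoc, h]
  apply div_nonneg
  · exact Finset.prod_nonneg fun i _ => by positivity
  · positivity

theorem series_mul (β : ℝ) :
    PowerSeries.mk (varrho β) * PowerSeries.mk (varpi β) = 1 := by
  ext n
  rw [PowerSeries.coeff_mul, PowerSeries.coeff_one]
  have h := Ring.add_choose_eq n (Commute.all (-β) β)
  rw [neg_add_cancel, Ring.choose_zero_ite] at h
  have h2 : ∑ p ∈ antidiagonal n, (PowerSeries.coeff p.1) (PowerSeries.mk (varrho β)) *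
      (PowerSeries.coeff p.2) (PowerSeries.mk (varpi β)) = (-1 : ℝ) ^ n *
        ∑ ij ∈ antidiagonal n, Ring.choose (-β) ij.1 * Ring.choose β ij.2 := by
    rw [Finset.mul_sum]
    refine Finset.sum_congr rfl fun p hp => ?_
    rw [HasAntidiagonal.mem_antidiagonal] at hp
    rw [PowerSeries.coeff_mk, PowerSeries.coeff_mk, varrho, varpi, genBinom_eq_choose,
      genBinom_eq_choose, ← hp, pow_add]
    ring
  rw [h2, ← h]
  split_ifs with h0
  · simp [h0]
  · simp

theorem conv_identity (β : ℝ) (w : ℕ → ℝ) (k : ℕ) :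
    ∑ m ∈ Finset.range (k + 1), varrho β (k - m) *
      (∑ j ∈ Finset.range (m + 1), varpi β (m - j) * w j) = w k := by
  have h : PowerSeries.mk w * PowerSeries.mk (varpi β) * PowerSeries.mk (varrho β)
      = PowerSeries.mk w := by
    rw [mul_assoc, mul_comm (PowerSeries.mk (varpi β)), series_mul, mul_one]
  have h1 := congrArg (PowerSeries.coeff k) h
  rw [PowerSeries.coeff_mul, PowerSeries.coeff_mk,
    Finset.Nat.sum_antidiagonal_eq_sum_range_succ_mk] at h1
  rw [← h1]
  refine Finset.sum_congr rfl fun m _ => ?_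
  rw [PowerSeries.coeff_mul, Finset.Nat.sum_antidiagonal_eq_sum_range_succ_mk, mul_comm]
  simp [PowerSeries.coeff_mk, mul_comm]

/-- Discrete fractional Grönwall inequality without step-size restriction. -/
theorem discrete_fractional_gronwall_no_restriction (β τ : ℝ) (hβ0 : 0 < β) (hβ1 : β < 1)
    (hτ : 0 < τ)
    (nT : ℕ) (hnT : 1 ≤ nT)
    (g v : ℕ → ℝ)
    (hg : ∀ k, 1 ≤ k → k ≤ nT → 0 ≤ g k)
    (hv : ∀ k ≤ nT, 0 ≤ v k)
    (hineq : ∀ k : ℕ, 1 ≤ k → k ≤ nT →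
      τ ^ (-β) * ∑ j ∈ Finset.range (k + 1), varpi β (k - j) * ((v j) ^ 2 - (v 0) ^ 2)
        ≤ v k * g k) :
    ∀ k : ℕ, ∀ hk : 1 ≤ k, k ≤ nT →
      v k ≤ 2 * (v 0 + (Finset.Icc 1 k).sup' (Finset.nonempty_Icc.mpr hk)
          (fun m => ∑ j ∈ Finset.Icc 1 m, τ ^ β * varrho β (m - j) * g j)) := by
  intro k hk hkn
  have key : ∀ K, 1 ≤ K → K ≤ nT → v K ^ 2 - v 0 ^ 2 ≤
      ∑ m ∈ Finset.Icc 1 K, τ ^ β * varrho β (K - m) * (v m * g m) := by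
    intro K hK hKn
    rw [← conv_identity β (fun j => v j ^ 2 - v 0 ^ 2) K]
    have hsub : Finset.Icc 1 K ⊆ Finset.range (K + 1) := by
      intro x hx
      simp only [Finset.mem_Icc, Finset.mem_range] at *
      omega
    rw [← Finset.sum_subset hsub]
    · refine Finset.sum_le_sum fun m hm => ?_
      rw [Finset.mem_Icc] at hm
      have h1 := hineq m hm.1 (hm.2.trans hKn)
      have hp : 0 < τ ^ β := Real.rpow_pos_of_pos hτ β
      rw [Real.rpow_neg hτ.le, inv_mul_le_iff₀ hp] at h1
      have h2 := mul_le_mul_of_nonneg_left h1 (varrho_nonneg β hβ0 (K - m))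
      refine h2.trans (le_of_eq ?_)
      ring
    · intro x hx hx'
      simp only [Finset.mem_Icc, Finset.mem_range] at *
      have : x = 0 := by omega
      subst this
      simp
  set G := (Finset.Icc 1 k).sup' (Finset.nonempty_Icc.mpr hk)
          (fun m => ∑ j ∈ Finset.Icc 1 m, τ ^ β * varrho β (m - j) * g j) with hG
  have hP : ∀ n, 0 ≤ τ ^ β * varrho β n := fun n =>
    mul_nonneg (Real.rpow_nonneg hτ.le β) (varrho_nonneg β hβ0 n)
  have hGle : ∀ K, 1 ≤ K → K ≤ k → ∑ j ∈ Finset.Icc 1 K, τ ^ β * varrho β (K - j) * g j ≤ G :=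
    fun K h1 h2 => Finset.le_sup' (fun m => ∑ j ∈ Finset.Icc 1 m, τ ^ β * varrho β (m - j) * g j)
      (Finset.mem_Icc.mpr ⟨h1, h2⟩)
  have hG0 : 0 ≤ G := by
    refine le_trans (Finset.sum_nonneg fun j hj => ?_) (hGle k hk le_rfl)
    rw [Finset.mem_Icc] at hj
    exact mul_nonneg (hP _) (hg j hj.1 (hj.2.trans hkn))
  have hv0 := hv 0 (Nat.zero_le _)
  obtain ⟨K, hKmem, hKmax⟩ := Finset.exists_max_image (Finset.range (k + 1)) v ⟨0, by simp⟩
  have hKk : K ≤ k := by simpa [Nat.lt_succ_iff] using hKmem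
  have hmax : ∀ m, m ≤ k → v m ≤ v K := fun m hm => hKmax m (by simp; omega)
  have hfin : v K ≤ v 0 + G := by
    rcases Nat.eq_zero_or_pos K with h0 | hpos
    · rw [h0]; linarith
    · have h1 := key K hpos (hKk.trans hkn)
      have h2 : ∑ m ∈ Finset.Icc 1 K, τ ^ β * varrho β (K - m) * (v m * g m) ≤ v K * G := by
        refine le_trans ?_ (mul_le_mul_of_nonneg_left (hGle K hpos hKk) (hv K (hKk.trans hkn)))
        rw [Finset.mul_sum]
        refine Finset.sum_le_sum fun m hm => ?_
        rw [Finset.mem_Icc] at hm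
        have h3 := mul_le_mul_of_nonneg_right (hmax m (hm.2.trans hKk))
          (mul_nonneg (hP (K - m)) (hg m hm.1 ((hm.2.trans hKk).trans hkn)))
        linarith
      have h4 := hmax 0 (Nat.zero_le _)
      by_contra hlt
      push Not at hlt
      nlinarith [mul_le_mul_of_nonneg_left h4 hv0]
  have := hmax k le_rfl
  linarith
end
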